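/- Let Θ_η = Σ_{I ∈ 𝕀} f_I H_I ∈ U. Then: (a) for every weight λ and every k with 1 ≤ k ≤ N-1, e_k Θ_η v_λ = 0 in M(λ); (b) if moreover (λ, η) = 1 - N (equivalently (λ+ρ, η) = 1), then also e_N Θ_η v_λ = 0, so that Θ_η v_λ is a vector of M(λ) annihilated by e_1, …, e_N; thus Θ_η is a Shapovalov element for the pair (η, 1). -/

import Mathlib

noncomputable section

open FreeAlgebra

/-- `𝕜 = F(q)`, the field of rational functions over `F`. -/
abbrev kk (F : Type) [Field F] : Type := RatFunc F

/-- The variable `q`. -/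
def qq (F : Type) [Field F] : kk F := RatFunc.X

/-- `v = q²`. -/
def vv (F : Type) [Field F] : kk F := qq F ^ 2

/-- The balanced quantum integer `[n]_v`. -/
def qint (F : Type) [Field F] (n : ℤ) : kk F :=
  (vv F ^ n - vv F ^ (-n)) / (vv F - (vv F)⁻¹)

/-- The quantum factorial `[m]_v!`. -/
def qfact (F : Type) [Field F] (m : ℕ) : kk F :=
  ∏ j ∈ Finset.Icc 1 m, qint F j

/-- The balanced Gaussian binomial coefficient `C(n,i)_v`. -/
def qbinom (F : Type) [Field F] (n i : ℕ) : kk F :=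
  qfact F n / (qfact F i * qfact F (n - i))

/-- The Cartan matrix of `sl(N+1)`, with 1-based indices. -/
def cartan (i j : ℕ) : ℤ :=
  if i = j then 2 else if i + 1 = j ∨ j + 1 = i then -1 else 0

/-- Generators of `U_q(sl(N+1))`: `e i`, `f i`, `k i`, `kinv i` (0-based `i : Fin N`,
corresponding to the 1-based index `i+1`). -/
inductive Gen (N : ℕ) : Type
  | e : Fin N → Gen N
  | f : Fin N → Gen N
  | k : Fin N → Gen N
  | kinv : Fin N → Gen N

/-- The defining relations of `U_q(sl(N+1))`. -/
inductive UqRel (F : Type) [Field F] (N : ℕ) :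
    FreeAlgebra (kk F) (Gen N) → FreeAlgebra (kk F) (Gen N) → Prop
  | kkinv (i : Fin N) : UqRel F N (ι (kk F) (Gen.k i) * ι (kk F) (Gen.kinv i)) 1
  | kinvk (i : Fin N) : UqRel F N (ι (kk F) (Gen.kinv i) * ι (kk F) (Gen.k i)) 1
  | kcomm (i j : Fin N) :
      UqRel F N (ι (kk F) (Gen.k i) * ι (kk F) (Gen.k j))
        (ι (kk F) (Gen.k j) * ι (kk F) (Gen.k i))
  | ke (i j : Fin N) :
      UqRel F N (ι (kk F) (Gen.k i) * ι (kk F) (Gen.e j) * ι (kk F) (Gen.kinv i))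
        ((qq F ^ cartan ((i : ℕ) + 1) ((j : ℕ) + 1)) • ι (kk F) (Gen.e j))
  | kf (i j : Fin N) :
      UqRel F N (ι (kk F) (Gen.k i) * ι (kk F) (Gen.f j) * ι (kk F) (Gen.kinv i))
        ((qq F ^ (-cartan ((i : ℕ) + 1) ((j : ℕ) + 1))) • ι (kk F) (Gen.f j))
  | ef (i j : Fin N) :
      UqRel F N (ι (kk F) (Gen.e i) * ι (kk F) (Gen.f j) - ι (kk F) (Gen.f j) * ι (kk F) (Gen.e i))
        (if i = j then
          ((qq F ^ 2 - qq F ^ (-2 : ℤ))⁻¹) •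
            ((ι (kk F) (Gen.k i)) ^ 2 - (ι (kk F) (Gen.kinv i)) ^ 2)
        else 0)
  | serre_e_near (i j : Fin N) (h : (i : ℕ) + 1 = j ∨ (j : ℕ) + 1 = i) :
      UqRel F N
        ((ι (kk F) (Gen.e i)) ^ 2 * ι (kk F) (Gen.e j)
          - (qq F ^ 2 + qq F ^ (-2 : ℤ)) •
              (ι (kk F) (Gen.e i) * ι (kk F) (Gen.e j) * ι (kk F) (Gen.e i))
          + ι (kk F) (Gen.e j) * (ι (kk F) (Gen.e i)) ^ 2) 0
  | serre_f_near (i j : Fin N) (h : (i : ℕ) + 1 = j ∨ (j : ℕ) + 1 = i) :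
      UqRel F N
        ((ι (kk F) (Gen.f i)) ^ 2 * ι (kk F) (Gen.f j)
          - (qq F ^ 2 + qq F ^ (-2 : ℤ)) •
              (ι (kk F) (Gen.f i) * ι (kk F) (Gen.f j) * ι (kk F) (Gen.f i))
          + ι (kk F) (Gen.f j) * (ι (kk F) (Gen.f i)) ^ 2) 0
  | serre_e_far (i j : Fin N) (h : (i : ℕ) + 1 < j ∨ (j : ℕ) + 1 < i) :
      UqRel F N (ι (kk F) (Gen.e i) * ι (kk F) (Gen.e j))
        (ι (kk F) (Gen.e j) * ι (kk F) (Gen.e i))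
  | serre_f_far (i j : Fin N) (h : (i : ℕ) + 1 < j ∨ (j : ℕ) + 1 < i) :
      UqRel F N (ι (kk F) (Gen.f i) * ι (kk F) (Gen.f j))
        (ι (kk F) (Gen.f j) * ι (kk F) (Gen.f i))

/-- The quantized enveloping algebra `U = U_q(sl(N+1))`. -/
abbrev Uq (F : Type) [Field F] (N : ℕ) : Type := RingQuot (UqRel F N)

variable (F : Type) [Field F] (N : ℕ)

/-- The image of a generator in `U`. -/
def gen (g : Gen N) : Uq F N := RingQuot.mkAlgHom (kk F) (UqRel F N) (ι (kk F) g)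

/-- `e_i` (1-based index `1 ≤ i ≤ N`; junk value `0` outside this range). -/
def egen (i : ℕ) : Uq F N :=
  if h : 1 ≤ i ∧ i ≤ N then gen F N (Gen.e ⟨i - 1, by omega⟩) else 0

/-- `f_i` (1-based index). -/
def fgen (i : ℕ) : Uq F N :=
  if h : 1 ≤ i ∧ i ≤ N then gen F N (Gen.f ⟨i - 1, by omega⟩) else 0

/-- `k_i` (1-based index). -/
def kgen (i : ℕ) : Uq F N :=
  if h : 1 ≤ i ∧ i ≤ N then gen F N (Gen.k ⟨i - 1, by omega⟩) else 0

/-- `k_i⁻¹` (1-based index). -/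
def kinvgen (i : ℕ) : Uq F N :=
  if h : 1 ≤ i ∧ i ≤ N then gen F N (Gen.kinv ⟨i - 1, by omega⟩) else 0

/-- Auxiliary recursion: `fword i d = f_{i, i+1+d}`. -/
def fword (i : ℕ) : ℕ → Uq F N
  | 0 => fgen F N i
  | d + 1 =>
      qq F • (fword i d * fgen F N (i + 1 + d)) -
        (qq F)⁻¹ • (fgen F N (i + 1 + d) * fword i d)

/-- The quantum root vector `f_{i,j}` (for `1 ≤ i < j ≤ N+1`). -/
def fij (i j : ℕ) : Uq F N := fword F N i (j - i - 1)

/-- Product of `f_{a,b}` over successive entries of a list. -/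
def fList : List ℕ → Uq F N
  | a :: b :: rest => fij F N a b * fList (b :: rest)
  | _ => 1

/-- `f_S` for a finite set `S` of indices. -/
def fSet (S : Finset ℕ) : Uq F N := fList F N (S.sort (· ≤ ·))

/-- The index set `𝕀` of subsets of `{1,…,N+1}` containing `1` and `N+1`. -/
def II : Finset (Finset ℕ) :=
  (Finset.Icc 1 (N + 1)).powerset.filter fun I => 1 ∈ I ∧ N + 1 ∈ I

/-- `r(I) = {s - 1 : s ∈ {1,…,N+1} \ I}`. -/
def rSet (I : Finset ℕ) : Finset ℕ := (Finset.Icc 1 (N + 1) \ I).image (· - 1)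

/-- `k_{σ_i} = k_1 ⋯ k_i`. -/
def kσ (i : ℕ) : Uq F N := ((List.range i).map fun j => kgen F N (j + 1)).prod

/-- `K_{σ_i} = k_{σ_i}²`. -/
def Kσ (i : ℕ) : Uq F N := kσ F N i ^ 2

/-- `k_{σ_i}⁻¹ = k_1⁻¹ ⋯ k_i⁻¹`. -/
def kσinv (i : ℕ) : Uq F N := ((List.range i).map fun j => kinvgen F N (j + 1)).prod

/-- `K_{σ_i}⁻¹`. -/
def KσInv (i : ℕ) : Uq F N := kσinv F N i ^ 2

/-- The element `h_i = -q⁻¹ v^{-(i-1)} K_{σ_i}⁻¹ (K_{σ_i} v^i - K_{σ_i}⁻¹ v^{-i})/(v - v⁻¹) ∈ U`. -/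
def hElt (i : ℕ) : Uq F N :=
  (-(qq F)⁻¹ * vv F ^ (1 - (i : ℤ)) * (vv F - (vv F)⁻¹)⁻¹) •
    (KσInv F N i * (vv F ^ (i : ℤ) • Kσ F N i - vv F ^ (-(i : ℤ)) • KσInv F N i))

/-- `H_I = ∏_{i ∈ r(I)} h_i` (product taken in increasing order of indices). -/
def HI (I : Finset ℕ) : Uq F N := (((rSet N I).sort (· ≤ ·)).map (hElt F N)).prod

/-- A weight `λ` is recorded by its values `(λ, α_j)` for `1 ≤ j ≤ N`;
`pairσ lam i = (λ, σ_i) = (λ, α_1 + ⋯ + α_i)`. -/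
def pairσ (lam : ℕ → ℤ) (i : ℕ) : ℤ := ∑ j ∈ Finset.Icc 1 i, lam j

/-- The scalar `h_i(λ) = -q⁻¹ v^{-((λ,σ_i)+i-1)} [(λ,σ_i)+i]_v`. -/
def hval (lam : ℕ → ℤ) (i : ℕ) : kk F :=
  -(qq F)⁻¹ * vv F ^ (-(pairσ lam i + (i : ℤ) - 1)) * qint F (pairσ lam i + (i : ℤ))

/-- The scalar `H_I(λ) = ∏_{i ∈ r(I)} h_i(λ)`. -/
def HIval (lam : ℕ → ℤ) (I : Finset ℕ) : kk F := ∏ i ∈ rSet N I, hval F lam i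

/-- The left ideal `J_λ` of `U` generated by `e_1, …, e_N` and the `k_j - q^{(λ,α_j)}`. -/
def vermaIdeal (lam : ℕ → ℤ) : Submodule (Uq F N) (Uq F N) :=
  Submodule.span (Uq F N)
    ({x | ∃ j, 1 ≤ j ∧ j ≤ N ∧ x = egen F N j} ∪
      {x | ∃ j, 1 ≤ j ∧ j ≤ N ∧
        x = kgen F N j - algebraMap (kk F) (Uq F N) (qq F ^ lam j)})

/-- The Verma module `M(λ) = U/J_λ`. -/
abbrev Verma (lam : ℕ → ℤ) : Type := Uq F N ⧸ vermaIdeal F N lam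

/-- The highest weight vector `v_λ`, the image of `1` in `M(λ)`. -/
def hw (lam : ℕ → ℤ) : Verma F N lam := Submodule.Quotient.mk 1

/-- The candidate Shapovalov element `Θ_η = Σ_{I ∈ 𝕀} f_I H_I`. -/
def Theta : Uq F N := ∑ I ∈ II N, fSet F N I * HI F N I

/-- `D^n(λ)`: the `(n-1) × (n-1)` matrix over `U` with `(i,j)` entry (1-based)
`f_{i,j+1}` if `i ≤ j`, `-h_j(λ)·1` if `i = j+1`, and `0` otherwise. -/
def Dmat (lam : ℕ → ℤ) (n : ℕ) : Matrix (Fin (n - 1)) (Fin (n - 1)) (Uq F N) :=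
  Matrix.of fun i j =>
    if (i : ℕ) ≤ (j : ℕ) then fij F N ((i : ℕ) + 1) ((j : ℕ) + 2)
    else if (i : ℕ) = (j : ℕ) + 1 then
      -(algebraMap (kk F) (Uq F N) (hval F lam ((j : ℕ) + 1)))
    else 0

/-- The left-to-right determinant of a matrix with noncommutative entries. -/
def ldet {m : ℕ} (B : Matrix (Fin m) (Fin m) (Uq F N)) : Uq F N :=
  ∑ w : Equiv.Perm (Fin m),
    ((Equiv.Perm.sign w : ℤˣ) : ℤ) • ((List.finRange m).map fun j => B (w j) j).prod

end

/-!
Let `Θ_a` be the analogue of `Θ_η` in which the sum runs over the chains from `a` to `N + 1`, so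
that `Θ_η v = Θ_1 v` for a highest weight vector `v`. Splitting off the first step of a chain gives
`Θ_a v = ∑_{a < b} (∏_{a < s < b} h_{s-1}(λ)) f_{a,b} Θ_b v`, and `e_i f_{a,b} w` with `e_i w = 0`
is nonzero only if `i = a` or `i = b - 1`. Let `n = (λ, α_i)`, let `k` be the `α_i`-weight of
`Θ_{i+1} v`, and suppose that

  `e_i Θ_i v = q⁻¹ v^{-k} h_{i-1}(λ) Θ_{i+1} v`.

Then, for `a < i`, the terms `b = i` and `b = i + 1` of `e_i Θ_a v` cancel and the others vanish by
descending induction on `a`; for `i = 1` the right hand side is zero because `h_0(λ) = 0`. Hence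
`e_i Θ_η v = 0`. The displayed relation reads
`[n + 1] + q v^n h_i(λ) = q⁻¹ v^{-(n + 1)} h_{i-1}(λ)` for `i < N`, which is the addition formula
`[s + t] = v^s [t] + v^{-t} [s]`, and `[n] = q⁻¹ v^{-n} h_{N-1}(λ)` for `i = N`, which holds when
`(λ, η) = 1 - N`.
-/

section MonoidActions

theorem smul_smul_comm_of_commute {A M : Type*} [Monoid A] [MulAction A M] {x y : A}
    (hxy : Commute x y) (w : M) : x • y • w = y • x • w := by
  rw [← mul_smul, hxy.eq, mul_smul]

theorem sq_smul_of_smul {K A M : Type*} [Monoid K] [Monoid A] [MulAction K M] [MulAction A M]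
    [SMulCommClass A K M] {x : A} {c : K} {w : M} (hx : x • w = c • w) :
    x ^ 2 • w = c ^ 2 • w := by
  rw [pow_two, mul_smul, hx, smul_comm, hx, smul_smul, pow_two]

theorem list_map_prod_smul {K A M ι : Type*} [CommMonoid K] [Monoid A] [MulAction K M]
    [MulAction A M] [SMulCommClass A K M] {v : M} {x : ι → A} {c : ι → K} {l : List ι}
    (h : ∀ i ∈ l, x i • v = c i • v) : (l.map x).prod • v = (l.map c).prod • v := by
  induction l with
  | nil => simp only [List.map_nil, List.prod_nil, one_smul]
  | cons i l ih =>
    simp only [List.forall_mem_cons] at h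
    rw [List.map_cons, List.prod_cons, List.map_cons, List.prod_cons, mul_smul, ih h.2, smul_comm,
      h.1, smul_smul, mul_comm]

end MonoidActions

section QuantumIntegers

variable (F : Type) [Field F]

theorem qq_ne_zero : qq F ≠ 0 := RatFunc.X_ne_zero

theorem vv_ne_zero : vv F ≠ 0 := pow_ne_zero 2 (qq_ne_zero F)

theorem vv_sub_inv_ne_zero : vv F - (vv F)⁻¹ ≠ 0 := by
  have hX : (Polynomial.X ^ 4 - Polynomial.C 1 : Polynomial F) ≠ 0 :=
    Polynomial.X_pow_sub_C_ne_zero (by norm_num) 1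
  have hq : qq F ^ 4 - 1 ≠ 0 := by
    simpa [qq] using (RatFunc.algebraMap_ne_zero hX)
  have hv : vv F - (vv F)⁻¹ = (qq F ^ 4 - 1) / vv F := by
    have := qq_ne_zero F
    simp only [vv]
    field_simp
  rw [hv]
  exact div_ne_zero hq (vv_ne_zero F)

theorem qint_zero : qint F 0 = 0 := by simp [qint]

theorem qint_one : qint F 1 = 1 := by
  simpa [qint] using div_self (vv_sub_inv_ne_zero F)

theorem qint_neg (n : ℤ) : qint F (-n) = -qint F n := by
  rw [qint, qint, neg_neg, ← neg_div, neg_sub]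

theorem qint_add (m n : ℤ) :
    qint F (m + n) = vv F ^ m * qint F n + vv F ^ (-n) * qint F m := by
  simp only [qint, neg_add, zpow_add₀ (vv_ne_zero F)]
  ring

variable {F}

theorem qint_add_one (n : ℤ) : qint F (n + 1) = vv F ^ n + (vv F)⁻¹ * qint F n := by
  rw [qint_add, qint_one, mul_one, zpow_neg_one]

theorem qint_add_one' (n : ℤ) : qint F (n + 1) = vv F * qint F n + vv F ^ (-n) := by
  rw [add_comm, qint_add, qint_one, mul_one, zpow_one]

theorem pairσ_succ (lam : ℕ → ℤ) (i : ℕ) :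
    pairσ lam (i + 1) = pairσ lam i + lam (i + 1) :=
  Finset.sum_Icc_succ_top (Nat.le_add_left 1 i) lam

theorem hval_zero (lam : ℕ → ℤ) : hval F lam 0 = 0 := by
  simp [hval, pairσ, qint_zero]

theorem qint_add_hval_succ (lam : ℕ → ℤ) (i : ℕ) :
    qint F (lam (i + 1) + 1) + qq F * vv F ^ lam (i + 1) * hval F lam (i + 1) =
      (qq F)⁻¹ * vv F ^ (-(lam (i + 1) + 1)) * hval F lam i := by
  have hsum : pairσ lam (i + 1) + ((i + 1 : ℕ) : ℤ) = (pairσ lam i + i) + (lam (i + 1) + 1) := by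
    rw [pairσ_succ]; push_cast; ring
  have hq := qq_ne_zero F
  have hv := vv_ne_zero F
  rw [hval, hval, hsum, qint_add F (pairσ lam i + i)]
  generalize lam (i + 1) = n
  generalize pairσ lam i + (i : ℤ) = s
  generalize qint F (n + 1) = x
  simp only [neg_add, sub_eq_add_neg, zpow_add₀ hv, zpow_neg, zpow_one, neg_neg]
  field_simp
  rw [vv]
  ring

theorem qint_eq_hval_of_pairσ_eq (lam : ℕ → ℤ) (i : ℕ)
    (hlam : pairσ lam (i + 1) = 1 - ((i + 1 : ℕ) : ℤ)) :
    qint F (lam (i + 1)) = (qq F)⁻¹ * vv F ^ (-lam (i + 1)) * hval F lam i := by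
  have hsum : pairσ lam i + (i : ℤ) = -lam (i + 1) := by
    rw [pairσ_succ] at hlam; push_cast at hlam; lia
  have hq := qq_ne_zero F
  have hv := vv_ne_zero F
  rw [hval, hsum, qint_neg]
  generalize lam (i + 1) = n
  simp only [sub_eq_add_neg, zpow_add₀ hv, zpow_neg, zpow_one]
  field_simp
  rw [vv]

theorem sq_smul_of_smul_zpow {A M : Type*} [Monoid A] [MulAction (kk F) M] [MulAction A M]
    [SMulCommClass A (kk F) M] {x : A} {n : ℤ} {w : M} (hx : x • w = qq F ^ n • w) :
    x ^ 2 • w = vv F ^ n • w := by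
  rw [sq_smul_of_smul hx, vv, ← zpow_natCast, ← zpow_natCast, zpow_comm]

end QuantumIntegers

section Relations

variable (F : Type) [Field F] (N : ℕ)

variable {N}

theorem kinvgen_mul_kgen {i : ℕ} (hi : 1 ≤ i ∧ i ≤ N) : kinvgen F N i * kgen F N i = 1 := by
  simpa [kgen, kinvgen, hi, gen] using
    RingQuot.mkAlgHom_rel (kk F) (UqRel.kinvk (F := F) (⟨i - 1, by lia⟩ : Fin N))

variable (N)

theorem kgen_mul_fgen (i j : ℕ) :
    kgen F N i * fgen F N j = qq F ^ (-cartan i j) • (fgen F N j * kgen F N i) := by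
  by_cases hi : 1 ≤ i ∧ i ≤ N
  swap
  · simp [kgen, hi]
  by_cases hj : 1 ≤ j ∧ j ≤ N
  swap
  · simp [fgen, hj]
  have hconj : kgen F N i * fgen F N j * kinvgen F N i = qq F ^ (-cartan i j) • fgen F N j := by
    have h := RingQuot.mkAlgHom_rel (kk F)
      (UqRel.kf (F := F) (⟨i - 1, by lia⟩ : Fin N) ⟨j - 1, by lia⟩)
    simpa [kgen, kinvgen, fgen, hi, hj, gen] using h
  rw [← smul_mul_assoc, ← hconj, mul_assoc, kinvgen_mul_kgen F hi, mul_one]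

theorem commute_egen_fgen {i j : ℕ} (hij : i ≠ j) : Commute (egen F N i) (fgen F N j) := by
  by_cases hi : 1 ≤ i ∧ i ≤ N
  swap
  · simp [egen, hi]
  by_cases hj : 1 ≤ j ∧ j ≤ N
  swap
  · simp [fgen, hj]
  have h := RingQuot.mkAlgHom_rel (kk F)
    (UqRel.ef (F := F) (⟨i - 1, by lia⟩ : Fin N) ⟨j - 1, by lia⟩)
  rw [if_neg (by rw [Fin.mk.injEq]; lia)] at h
  simpa [commute_iff_eq, sub_eq_zero, egen, fgen, hi, hj, gen] using h

theorem egen_mul_fgen_self (i : ℕ) :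
    egen F N i * fgen F N i = fgen F N i * egen F N i +
      (vv F - (vv F)⁻¹)⁻¹ • (kgen F N i ^ 2 - kinvgen F N i ^ 2) := by
  by_cases hi : 1 ≤ i ∧ i ≤ N
  swap
  · simp [egen, kgen, kinvgen, hi]
  have h := RingQuot.mkAlgHom_rel (kk F)
    (UqRel.ef (F := F) (⟨i - 1, by lia⟩ : Fin N) ⟨i - 1, by lia⟩)
  rw [← sub_eq_iff_eq_add']
  simpa [egen, fgen, kgen, kinvgen, hi, gen, vv, zpow_neg] using h

theorem commute_fgen {i j : ℕ} (hij : i + 1 < j) : Commute (fgen F N i) (fgen F N j) := by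
  by_cases hi : 1 ≤ i ∧ i ≤ N
  swap
  · simp [fgen, hi]
  by_cases hj : 1 ≤ j ∧ j ≤ N
  swap
  · simp [fgen, hj]
  have h := RingQuot.mkAlgHom_rel (kk F) (UqRel.serre_f_far (F := F) (⟨i - 1, by lia⟩ : Fin N)
    ⟨j - 1, by lia⟩ (Or.inl (show i - 1 + 1 < j - 1 by lia)))
  simpa [commute_iff_eq, fgen, hi, hj, gen] using h

theorem fij_self_succ (a : ℕ) : fij F N a (a + 1) = fgen F N a := by
  rw [fij, Nat.add_sub_cancel_left, Nat.sub_self, fword]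

theorem fij_succ {a b : ℕ} (hab : a < b) :
    fij F N a (b + 1) =
      qq F • (fij F N a b * fgen F N b) - (qq F)⁻¹ • (fgen F N b * fij F N a b) := by
  obtain ⟨d, rfl⟩ := Nat.exists_eq_add_of_lt hab
  rw [fij, fij, show a + d + 1 + 1 - a - 1 = d + 1 by lia, show a + d + 1 - a - 1 = d by lia,
    fword, Nat.add_right_comm]

variable {F N}

theorem commute_fij {x : Uq F N} {a b : ℕ} (hab : a < b)
    (hx : ∀ j ∈ Finset.Ico a b, Commute x (fgen F N j)) : Commute x (fij F N a b) := by
  induction b, hab using Nat.le_induction with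
  | base => rw [Nat.succ_eq_add_one, fij_self_succ]; exact hx a (by simp)
  | succ b hab ih =>
    have hfij := ih fun j hj => hx j (by rw [Finset.mem_Ico] at hj ⊢; lia)
    have hb := hx b (by rw [Finset.mem_Ico]; lia)
    rw [fij_succ F N hab]
    exact ((hfij.mul_right hb).smul_right _).sub_right ((hb.mul_right hfij).smul_right _)

end Relations

section SingularVectors

variable {F : Type} [Field F] {N : ℕ} {M : Type*} [AddCommGroup M] [Module (Uq F N) M]
  {i j a b : ℕ} {n : ℤ}

theorem egen_smul_fgen_smul (hij : i ≠ j) (w : M) :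
    egen F N i • fgen F N j • w = fgen F N j • egen F N i • w :=
  smul_smul_comm_of_commute (commute_egen_fgen F N hij) w

theorem egen_smul_fij_smul_of_notMem (hab : a < b) (hi : i < a ∨ b ≤ i) (w : M) :
    egen F N i • fij F N a b • w = fij F N a b • egen F N i • w :=
  smul_smul_comm_of_commute
    (commute_fij hab fun j hj => commute_egen_fgen F N (by rw [Finset.mem_Ico] at hj; lia)) w

variable [Module (kk F) M] [IsScalarTower (kk F) (Uq F N) M] {w : M}

theorem fij_succ_smul (hab : a < b) (w : M) :
    fij F N a (b + 1) • w =
      qq F • fij F N a b • fgen F N b • w - (qq F)⁻¹ • fgen F N b • fij F N a b • w := by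
  rw [fij_succ F N hab, sub_smul, smul_assoc, smul_assoc, mul_smul, mul_smul]

variable (F N M) in
/-- The space of vectors that are of highest weight `n` for the `i`-th copy of `U_q(sl(2))`:
they are killed by `e_i`, and `k_i` acts on them by `q ^ n`. -/
def singularSpace (i : ℕ) (n : ℤ) : Submodule (kk F) M where
  carrier := {w | egen F N i • w = 0 ∧ kgen F N i • w = qq F ^ n • w}
  add_mem' := fun ⟨he, hk⟩ ⟨he', hk'⟩ =>
    ⟨by rw [smul_add, he, he', add_zero], by rw [smul_add, smul_add, hk, hk']⟩
  zero_mem' := by simp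
  smul_mem' c w := fun ⟨he, hk⟩ =>
    ⟨by rw [smul_comm, he, smul_zero], by rw [smul_comm, hk, smul_comm]⟩

theorem egen_smul_of_mem (hw : w ∈ singularSpace F N M i n) : egen F N i • w = 0 := hw.1

theorem kgen_smul_of_mem (hw : w ∈ singularSpace F N M i n) :
    kgen F N i • w = qq F ^ n • w := hw.2

theorem kinvgen_smul_of_mem (hw : w ∈ singularSpace F N M i n) :
    kinvgen F N i • w = qq F ^ (-n) • w := by
  by_cases hi : 1 ≤ i ∧ i ≤ N
  · have hinv : kinvgen F N i • kgen F N i • w = w := by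
      rw [← mul_smul, kinvgen_mul_kgen F hi, one_smul]
    rw [kgen_smul_of_mem hw, smul_comm] at hinv
    rw [zpow_neg, eq_inv_smul_iff₀ (zpow_ne_zero n (qq_ne_zero F)), hinv]
  · have hw0 : w = 0 := by
      simpa [kgen, hi, zpow_ne_zero, qq_ne_zero] using (kgen_smul_of_mem hw).symm
    simp [hw0]

theorem egen_smul_fgen_smul_self (hw : w ∈ singularSpace F N M i n) :
    egen F N i • fgen F N i • w = qint F n • w := by
  have hk : kgen F N i ^ 2 • w = vv F ^ n • w :=
    sq_smul_of_smul_zpow (kgen_smul_of_mem hw)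
  have hkinv : kinvgen F N i ^ 2 • w = vv F ^ (-n) • w :=
    sq_smul_of_smul_zpow (kinvgen_smul_of_mem hw)
  rw [← mul_smul, egen_mul_fgen_self, add_smul, mul_smul, egen_smul_of_mem hw, smul_zero, zero_add,
    smul_assoc, sub_smul, hk, hkinv, ← sub_smul, smul_smul, qint, div_eq_inv_mul]

theorem fgen_smul_mem (hij : i ≠ j) (hw : w ∈ singularSpace F N M i n) :
    fgen F N j • w ∈ singularSpace F N M i (n - cartan i j) := by
  constructor
  · rw [egen_smul_fgen_smul hij, egen_smul_of_mem hw, smul_zero]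
  · rw [← mul_smul, kgen_mul_fgen, smul_assoc, mul_smul, kgen_smul_of_mem hw,
      smul_comm (fgen F N j), smul_smul, ← zpow_add₀ (qq_ne_zero F), neg_add_eq_sub]

theorem fgen_smul_mem_of_add_one_lt (hij : i + 1 < j) (hw : w ∈ singularSpace F N M i n) :
    fgen F N j • w ∈ singularSpace F N M i n := by
  have hcartan : cartan i j = 0 := by
    rw [cartan, if_neg (by lia), if_neg (by lia)]
  simpa [hcartan] using fgen_smul_mem (show i ≠ j by lia) hw

theorem fgen_add_one_smul_mem (hw : w ∈ singularSpace F N M i n) :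
    fgen F N (i + 1) • w ∈ singularSpace F N M i (n + 1) := by
  simpa [cartan] using fgen_smul_mem (Nat.succ_ne_self i).symm hw

theorem fij_smul_mem (hab : a < b) (hi : i < a ∨ b ≤ i) (hw : w ∈ singularSpace F N M i n) :
    fij F N a b • w ∈ singularSpace F N M i (n - ∑ j ∈ Finset.Ico a b, cartan i j) := by
  induction b, hab using Nat.le_induction generalizing n w with
  | base => simpa [fij_self_succ] using fgen_smul_mem (show i ≠ a by lia) hw
  | succ b hab ih =>
    have hbi : i ≠ b := by lia
    rw [fij_succ_smul hab, Finset.sum_Ico_succ_top (by lia)]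
    refine sub_mem (Submodule.smul_mem _ _ ?_) (Submodule.smul_mem _ _ ?_)
    · convert ih (by lia) (fgen_smul_mem hbi hw) using 1
      ring_nf
    · convert fgen_smul_mem hbi (ih (by lia) hw) using 1
      ring_nf

theorem sum_Ico_cartan (hab : a ≤ b) :
    ∑ j ∈ Finset.Ico a b, cartan i j =
      ((if i = a then 1 else 0) - if i + 1 = a then 1 else 0) -
        ((if i = b then 1 else 0) - if i + 1 = b then 1 else 0) := by
  induction b, hab using Nat.le_induction with
  | base => simp
  | succ b hab ih =>
    rw [Finset.sum_Ico_succ_top hab, ih, cartan]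
    split_ifs <;> lia

theorem egen_smul_fij_smul_left (hib : i + 1 < b) (hw : w ∈ singularSpace F N M i n) :
    egen F N i • fij F N i b • w = (qq F * vv F ^ n) • fij F N (i + 1) b • w := by
  induction b, hib using Nat.le_induction generalizing w with
  | base =>
    have hqint : qq F * qint F (n + 1) - (qq F)⁻¹ * qint F n = qq F * vv F ^ n := by
      have hq := qq_ne_zero F
      rw [qint_add_one, vv]
      field_simp
      ring
    rw [Nat.succ_eq_add_one, fij_succ_smul (by lia), fij_self_succ, fij_self_succ, smul_sub,
      smul_comm (egen F N i) (qq F), smul_comm (egen F N i) (qq F)⁻¹,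
      egen_smul_fgen_smul_self (fgen_add_one_smul_mem hw), egen_smul_fgen_smul (by lia),
      egen_smul_fgen_smul_self hw, smul_comm (fgen F N (i + 1)),
      smul_smul (qq F), smul_smul (qq F)⁻¹, ← sub_smul, hqint]
  | succ b hib ih =>
    rw [fij_succ_smul (by lia), fij_succ_smul (by lia), smul_sub,
      smul_comm (egen F N i) (qq F), smul_comm (egen F N i) (qq F)⁻¹,
      ih (fgen_smul_mem_of_add_one_lt hib hw), egen_smul_fgen_smul (by lia), ih hw,
      smul_comm (fgen F N b), smul_comm (qq F) (qq F * vv F ^ n),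
      smul_comm (qq F)⁻¹ (qq F * vv F ^ n), ← smul_sub]

theorem egen_smul_fij_smul_right (hai : a < i) (hw : w ∈ singularSpace F N M i n) :
    egen F N i • fij F N a (i + 1) • w = -((qq F)⁻¹ * vv F ^ (-n)) • fij F N a i • w := by
  have hmem : fij F N a i • w ∈ singularSpace F N M i (n + 1) := by
    simpa [sum_Ico_cartan hai.le, hai.ne', show i + 1 ≠ a by lia] using
      fij_smul_mem hai (Or.inr le_rfl) hw
  have hqint : qq F * qint F n - (qq F)⁻¹ * qint F (n + 1) = -((qq F)⁻¹ * vv F ^ (-n)) := by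
    have hq := qq_ne_zero F
    rw [qint_add_one', vv]
    field_simp
    ring
  rw [fij_succ_smul hai, smul_sub, smul_comm (egen F N i) (qq F),
    smul_comm (egen F N i) (qq F)⁻¹, egen_smul_fij_smul_of_notMem hai (Or.inr le_rfl),
    egen_smul_fgen_smul_self hw, egen_smul_fgen_smul_self hmem, smul_comm (fij F N a i),
    smul_smul (qq F), smul_smul (qq F)⁻¹, ← sub_smul, hqint]

theorem egen_smul_fij_smul_of_mem_Ioo (hai : a < i) (hib : i + 1 < b)
    (hw : w ∈ singularSpace F N M i n) : egen F N i • fij F N a b • w = 0 := by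
  induction b, hib using Nat.le_induction generalizing w with
  | base =>
    have hcomm : fgen F N (i + 1) • fij F N a i • w = fij F N a i • fgen F N (i + 1) • w :=
      smul_smul_comm_of_commute
        (commute_fij hai fun j hj => (commute_fgen F N (by rw [Finset.mem_Ico] at hj; lia)).symm) w
    have hscalar : qq F * -((qq F)⁻¹ * vv F ^ (-(n + 1))) -
        (qq F)⁻¹ * -((qq F)⁻¹ * vv F ^ (-n)) = 0 := by
      have hq := qq_ne_zero F
      rw [neg_add, zpow_add₀ (vv_ne_zero F), zpow_neg_one, vv]
      field_simp
      ring
    rw [Nat.succ_eq_add_one, fij_succ_smul (by lia), smul_sub,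
      smul_comm (egen F N i) (qq F), smul_comm (egen F N i) (qq F)⁻¹,
      egen_smul_fij_smul_right hai (fgen_add_one_smul_mem hw), egen_smul_fgen_smul (by lia),
      egen_smul_fij_smul_right hai hw, smul_comm (fgen F N (i + 1)), hcomm, smul_smul (qq F),
      smul_smul (qq F)⁻¹, ← sub_smul, hscalar, zero_smul]
  | succ b hib ih =>
    rw [fij_succ_smul (by lia), smul_sub, smul_comm (egen F N i) (qq F),
      smul_comm (egen F N i) (qq F)⁻¹, ih (fgen_smul_mem_of_add_one_lt hib hw),
      egen_smul_fgen_smul (by lia), ih hw, smul_zero, smul_zero, smul_zero, sub_zero]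

end SingularVectors

section Chains

/-- The chains from `a` to `N + 1`, encoded as the subsets of `{a, …, N + 1}` containing both
endpoints; `chainSets N 1` is the index set `𝕀`. -/
def chainSets (N a : ℕ) : Finset (Finset ℕ) :=
  (Finset.Icc a (N + 1)).powerset.filter fun I => a ∈ I ∧ N + 1 ∈ I

theorem mem_chainSets {N a : ℕ} {I : Finset ℕ} :
    I ∈ chainSets N a ↔ (∀ s ∈ I, a ≤ s ∧ s ≤ N + 1) ∧ a ∈ I ∧ N + 1 ∈ I := by
  simp only [chainSets, Finset.mem_filter, Finset.mem_powerset, Finset.subset_iff, Finset.mem_Icc]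

theorem insert_mem_chainSets {N a b : ℕ} {I : Finset ℕ} (hab : a < b)
    (hI : I ∈ chainSets N b) : insert a I ∈ chainSets N a := by
  rw [mem_chainSets] at hI ⊢
  obtain ⟨hmem, hb, hN⟩ := hI
  refine ⟨fun s hs => ?_, Finset.mem_insert_self a I, Finset.mem_insert_of_mem hN⟩
  rcases Finset.mem_insert.1 hs with rfl | hs
  · exact ⟨le_rfl, hab.le.trans (hmem b hb).2⟩
  · exact ⟨hab.le.trans (hmem s hs).1, (hmem s hs).2⟩

theorem exists_insert_eq_of_mem_chainSets {N a : ℕ} {I : Finset ℕ} (ha : a ≤ N)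
    (hI : I ∈ chainSets N a) :
    ∃ b ∈ Finset.Ioc a (N + 1), ∃ J ∈ chainSets N b, insert a J = I := by
  obtain ⟨hmem, haI, hN⟩ := mem_chainSets.1 hI
  have hN' : N + 1 ∈ I.erase a := Finset.mem_erase.2 ⟨by lia, hN⟩
  have hmin := (I.erase a).min'_mem ⟨N + 1, hN'⟩
  obtain ⟨hne, hminI⟩ := Finset.mem_erase.1 hmin
  have hbound := hmem _ hminI
  refine ⟨_, Finset.mem_Ioc.2 ⟨by lia, hbound.2⟩, I.erase a, ?_, Finset.insert_erase haI⟩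
  exact mem_chainSets.2
    ⟨fun s hs => ⟨Finset.min'_le _ s hs, (hmem s (Finset.mem_of_mem_erase hs)).2⟩, hmin, hN'⟩

theorem Icc_sdiff_insert_of_mem_chainSets {N a b : ℕ} {I : Finset ℕ} (hab : a < b)
    (hI : I ∈ chainSets N b) :
    Finset.Icc a (N + 1) \ insert a I = Finset.Ioo a b ∪ Finset.Icc b (N + 1) \ I := by
  obtain ⟨hmem, hb, -⟩ := mem_chainSets.1 hI
  have hbN := (hmem b hb).2
  ext s
  have hs : s ∈ I → b ≤ s := fun hs => (hmem s hs).1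
  simp only [Finset.mem_sdiff, Finset.mem_Icc, Finset.mem_insert, Finset.mem_union, Finset.mem_Ioo]
  grind

variable {F : Type} [Field F] {N : ℕ}

theorem fSet_insert {a b : ℕ} {S : Finset ℕ} (hab : a < b) (hb : b ∈ S) (hS : ∀ s ∈ S, b ≤ s) :
    fSet F N (insert a S) = fij F N a b * fSet F N S := by
  have hsort : S.sort (· ≤ ·) = b :: (S.erase b).sort (· ≤ ·) := by
    rw [← Finset.sort_insert _ (fun s hs => hS s (Finset.mem_of_mem_erase hs))
      (Finset.notMem_erase b S), Finset.insert_erase hb]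
  rw [fSet, Finset.sort_insert _ (fun s hs => (hab.trans_le (hS s hs)).le)
    (fun ha => hab.not_ge (hS a ha)), fSet, hsort, fList]

variable (F N) in
/-- The analogue of `Θ_η` for the interval `{a, …, N + 1}`, with the scalar `c s` in place of
`h_{s-1}(λ)`. -/
noncomputable def chainTheta (c : ℕ → kk F) (a : ℕ) : Uq F N :=
  ∑ I ∈ chainSets N a, (∏ s ∈ Finset.Icc a (N + 1) \ I, c s) • fSet F N I

theorem chainTheta_top (c : ℕ → kk F) : chainTheta F N c (N + 1) = 1 := by
  have hsets : chainSets N (N + 1) = {{N + 1}} := by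
    ext I
    simp only [chainSets, Finset.Icc_self, Finset.mem_filter, Finset.mem_powerset, and_self,
      Finset.mem_singleton]
    grind
  simp [chainTheta, hsets, fSet, fList]

theorem chainTheta_eq_sum {a : ℕ} (c : ℕ → kk F) (ha : a ≤ N) :
    chainTheta F N c a = ∑ b ∈ Finset.Ioc a (N + 1),
      (∏ s ∈ Finset.Ioo a b, c s) • (fij F N a b * chainTheta F N c b) := by
  simp only [chainTheta, Finset.mul_sum, Finset.smul_sum, Finset.sum_sigma']
  symm
  refine Finset.sum_bij (fun p _ => insert a p.2) ?_ ?_ ?_ ?_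
  · rintro ⟨b, I⟩ hp
    obtain ⟨hb, hI⟩ := Finset.mem_sigma.1 hp
    exact insert_mem_chainSets (Finset.mem_Ioc.1 hb).1 hI
  · rintro ⟨b, I⟩ hp ⟨b', I'⟩ hp' heq
    simp only [Finset.mem_sigma, Finset.mem_Ioc, mem_chainSets] at hp hp'
    have ha : a ∉ I := fun h => by have := (hp.2.1 a h).1; lia
    have ha' : a ∉ I' := fun h => by have := (hp'.2.1 a h).1; lia
    obtain rfl : I = I' := by rw [← Finset.erase_insert ha, heq, Finset.erase_insert ha']
    obtain rfl : b = b' := le_antisymm (hp.2.1 b' hp'.2.2.1).1 (hp'.2.1 b hp.2.2.1).1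
    rfl
  · intro I hI
    obtain ⟨b, hb, J, hJ, rfl⟩ := exists_insert_eq_of_mem_chainSets ha hI
    exact ⟨⟨b, J⟩, Finset.mem_sigma.2 ⟨hb, hJ⟩, rfl⟩
  · rintro ⟨b, I⟩ hp
    obtain ⟨hb, hI⟩ := Finset.mem_sigma.1 hp
    have hab := (Finset.mem_Ioc.1 hb).1
    have hdisj : Disjoint (Finset.Ioo a b) (Finset.Icc b (N + 1) \ I) := by
      grind [Finset.disjoint_left]
    obtain ⟨hmem, hbI, -⟩ := mem_chainSets.1 hI
    rw [Icc_sdiff_insert_of_mem_chainSets hab hI, Finset.prod_union hdisj,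
      fSet_insert hab hbI fun s hs => (hmem s hs).1, mul_smul_comm, smul_smul]

end Chains

section ChainVectors

variable {F : Type} [Field F] {N : ℕ} {M : Type*} [AddCommGroup M] [Module (kk F) M]
  [Module (Uq F N) M] [IsScalarTower (kk F) (Uq F N) M] {i a b : ℕ} {n : ℤ} {v : M}
  {c : ℕ → kk F}

theorem chainTheta_smul (c : ℕ → kk F) (ha : a ≤ N) (v : M) :
    chainTheta F N c a • v = ∑ b ∈ Finset.Ioc a (N + 1),
      (∏ s ∈ Finset.Ioo a b, c s) • fij F N a b • chainTheta F N c b • v := by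
  simp only [chainTheta_eq_sum c ha, Finset.sum_smul, smul_assoc, mul_smul]

theorem chainTheta_smul_mem (c : ℕ → kk F) (hib : i < b) (hb : b ≤ N + 1)
    (hv : v ∈ singularSpace F N M i n) :
    chainTheta F N c b • v ∈
      singularSpace F N M i (n - ∑ j ∈ Finset.Ico b (N + 1), cartan i j) := by
  induction b using Nat.strong_decreasing_induction with
  | base => exact ⟨N + 1, fun b hlt _ hb => absurd hb (by lia)⟩
  | step b ih =>
    rcases hb.eq_or_lt with rfl | hb
    · simpa [chainTheta_top] using hv
    rw [chainTheta_smul c (by lia)]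
    refine sum_mem fun d hd => Submodule.smul_mem _ _ ?_
    obtain ⟨hbd, hdN⟩ := Finset.mem_Ioc.1 hd
    convert fij_smul_mem hbd (Or.inl hib) (ih d hbd (by lia) hdN) using 1
    rw [← Finset.sum_Ico_consecutive (cartan i) hbd.le hdN, sub_add_eq_sub_sub_swap]

theorem chainTheta_smul_mem_of_add_one_lt (c : ℕ → kk F) (hib : i + 1 < b) (hb : b ≤ N + 1)
    (hv : v ∈ singularSpace F N M i n) : chainTheta F N c b • v ∈ singularSpace F N M i n := by
  have hsum : ∑ j ∈ Finset.Ico b (N + 1), cartan i j = 0 := by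
    rw [sum_Ico_cartan hb]
    split_ifs <;> lia
  simpa [hsum] using chainTheta_smul_mem c (by lia) hb hv

theorem chainTheta_add_one_smul_mem (c : ℕ → kk F) (hi : i < N)
    (hv : v ∈ singularSpace F N M i n) :
    chainTheta F N c (i + 1) • v ∈ singularSpace F N M i (n + 1) := by
  have hsum : ∑ j ∈ Finset.Ico (i + 1) (N + 1), cartan i j = -1 := by
    rw [sum_Ico_cartan (by lia)]
    split_ifs <;> lia
  simpa [hsum] using chainTheta_smul_mem c (Nat.lt_succ_self i) (by lia) hv

theorem egen_smul_chainTheta_smul_self (c : ℕ → kk F) (hi : i < N)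
    (hv : v ∈ singularSpace F N M i n) :
    egen F N i • chainTheta F N c i • v =
      (qint F (n + 1) + qq F * vv F ^ n * c (i + 1)) • chainTheta F N c (i + 1) • v := by
  have hterm : ∀ b ∈ Finset.Ioc (i + 1) (N + 1),
      egen F N i • (∏ s ∈ Finset.Ioo i b, c s) • fij F N i b • chainTheta F N c b • v =
        (qq F * vv F ^ n * c (i + 1)) • (∏ s ∈ Finset.Ioo (i + 1) b, c s) •
          fij F N (i + 1) b • chainTheta F N c b • v := by
    intro b hb
    obtain ⟨hib, hbN⟩ := Finset.mem_Ioc.1 hb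
    have hprod : ∏ s ∈ Finset.Ioo i b, c s = c (i + 1) * ∏ s ∈ Finset.Ioo (i + 1) b, c s := by
      rw [Finset.mul_prod_Ioo_eq_prod_Ico hib, Finset.Ico_add_one_left_eq_Ioo]
    rw [smul_comm (egen F N i),
      egen_smul_fij_smul_left hib (chainTheta_smul_mem_of_add_one_lt c hib hbN hv),
      smul_comm _ (qq F * vv F ^ n), hprod, mul_smul (c (i + 1)), mul_smul _ (c (i + 1))]
  rw [chainTheta_smul c hi.le, Finset.smul_sum,
    ← Finset.sum_Ioc_consecutive _ (Nat.le_succ i) (by lia), Nat.Ioc_succ_singleton,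
    Finset.sum_singleton, Finset.sum_congr rfl hterm, ← Finset.smul_sum, ← chainTheta_smul c hi,
    add_smul, Finset.Ioo_add_one_right_eq_Ioc, Finset.Ioc_self, Finset.prod_empty, one_smul,
    fij_self_succ, egen_smul_fgen_smul_self (chainTheta_add_one_smul_mem c hi hv)]

theorem egen_smul_chainTheta_smul_top (c : ℕ → kk F) (hv : v ∈ singularSpace F N M N n) :
    egen F N N • chainTheta F N c N • v = qint F n • v := by
  rw [chainTheta_smul c le_rfl, Nat.Ioc_succ_singleton, Finset.sum_singleton,
    Finset.Ioo_add_one_right_eq_Ioc, Finset.Ioc_self, Finset.prod_empty, one_smul, chainTheta_top,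
    one_smul, fij_self_succ, egen_smul_fgen_smul_self hv]

theorem egen_smul_chainTheta_smul_eq_zero {k : ℤ} (hai : a < i) (hi : i ≤ N)
    (hv : v ∈ singularSpace F N M i n)
    (hsucc : chainTheta F N c (i + 1) • v ∈ singularSpace F N M i k)
    (hself : egen F N i • chainTheta F N c i • v =
      ((qq F)⁻¹ * vv F ^ (-k) * c i) • chainTheta F N c (i + 1) • v) :
    egen F N i • chainTheta F N c a • v = 0 := by
  induction a using Nat.strong_decreasing_induction with
  | base => exact ⟨i, fun a hia hai => absurd hai hia.not_gt⟩
  | step a ih =>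
    rw [chainTheta_smul c (by lia), Finset.smul_sum]
    have hzero : ∀ b ∈ Finset.Ioc a (N + 1), b ≠ i ∧ b ≠ i + 1 →
        egen F N i • (∏ s ∈ Finset.Ioo a b, c s) • fij F N a b • chainTheta F N c b • v = 0 := by
      rintro b hb ⟨hbi, hbi'⟩
      obtain ⟨hab, hbN⟩ := Finset.mem_Ioc.1 hb
      rw [smul_comm (egen F N i)]
      rcases hbi.lt_or_gt with hlt | hgt
      · rw [egen_smul_fij_smul_of_notMem hab (Or.inr hlt.le), ih b hab hlt, smul_zero, smul_zero]
      · have hib : i + 1 < b := by lia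
        rw [egen_smul_fij_smul_of_mem_Ioo hai hib
          (chainTheta_smul_mem_of_add_one_lt c hib hbN hv), smul_zero]
    have hprod : ∏ s ∈ Finset.Ioo a (i + 1), c s = (∏ s ∈ Finset.Ioo a i, c s) * c i := by
      rw [Finset.prod_Ioo_mul_eq_prod_Ioc hai, Finset.Ioo_add_one_right_eq_Ioc]
    rw [Finset.sum_eq_add_of_mem i (i + 1) (Finset.mem_Ioc.2 ⟨hai, by lia⟩)
        (Finset.mem_Ioc.2 ⟨by lia, by lia⟩) (Nat.lt_succ_self i).ne hzero,
      smul_comm (egen F N i), egen_smul_fij_smul_of_notMem hai (Or.inr le_rfl), hself,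
      smul_comm (egen F N i), egen_smul_fij_smul_right hai hsucc, hprod,
      smul_comm (fij F N a i), smul_smul (∏ s ∈ Finset.Ioo a i, c s),
      smul_smul _ (-((qq F)⁻¹ * vv F ^ (-k))), ← add_smul]
    convert zero_smul (kk F) (fij F N a i • chainTheta F N c (i + 1) • v) using 2
    ring

end ChainVectors

section HighestWeight

variable {F : Type} [Field F] {N : ℕ} {M : Type*} [AddCommGroup M] [Module (kk F) M]
  [Module (Uq F N) M] [IsScalarTower (kk F) (Uq F N) M] {lam : ℕ → ℤ} {v : M}

variable (F N) in
/-- Vectors of weight `λ` annihilated by all `e_i`, such as the image of `v_λ` under a homomorphism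
from the Verma module `M(λ)`. -/
def IsHighestWeightVector (lam : ℕ → ℤ) (v : M) : Prop :=
  ∀ i ∈ Finset.Icc 1 N, v ∈ singularSpace F N M i (lam i)

theorem isHighestWeightVector_hw (lam : ℕ → ℤ) :
    IsHighestWeightVector F N lam (hw F N lam) := by
  intro i hi
  obtain ⟨h1, hN⟩ := Finset.mem_Icc.1 hi
  have hmk : ∀ x ∈ vermaIdeal F N lam, x • hw F N lam = 0 := fun x hx => by
    rwa [hw, ← Submodule.Quotient.mk_smul, Submodule.Quotient.mk_eq_zero, smul_eq_mul, mul_one]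
  refine ⟨hmk _ (Submodule.subset_span (Or.inl ⟨i, h1, hN, rfl⟩)), ?_⟩
  have hk := hmk _ (Submodule.subset_span (Or.inr ⟨i, h1, hN, rfl⟩))
  rwa [sub_smul, sub_eq_zero, algebraMap_smul] at hk

theorem kσ_smul (hv : IsHighestWeightVector F N lam v) {i : ℕ} (hi : i ≤ N) :
    kσ F N i • v = qq F ^ pairσ lam i • v := by
  induction i with
  | zero => simp [kσ, pairσ]
  | succ i ih =>
    have hk := kgen_smul_of_mem (hv (i + 1) (Finset.mem_Icc.2 ⟨by lia, hi⟩))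
    have hkσ : kσ F N (i + 1) = kσ F N i * kgen F N (i + 1) := by simp [kσ, List.range_succ]
    rw [hkσ, mul_smul, hk, smul_comm (kσ F N i), ih (by lia), smul_smul, pairσ_succ,
      zpow_add₀ (qq_ne_zero F), mul_comm]

theorem kσinv_smul (hv : IsHighestWeightVector F N lam v) {i : ℕ} (hi : i ≤ N) :
    kσinv F N i • v = qq F ^ (-pairσ lam i) • v := by
  induction i with
  | zero => simp [kσinv, pairσ]
  | succ i ih =>
    have hk := kinvgen_smul_of_mem (hv (i + 1) (Finset.mem_Icc.2 ⟨by lia, hi⟩))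
    have hkσ : kσinv F N (i + 1) = kσinv F N i * kinvgen F N (i + 1) := by
      simp [kσinv, List.range_succ]
    rw [hkσ, mul_smul, hk, smul_comm (kσinv F N i), ih (by lia), smul_smul, pairσ_succ,
      neg_add, zpow_add₀ (qq_ne_zero F), mul_comm]

theorem hElt_smul (hv : IsHighestWeightVector F N lam v) {i : ℕ} (hi : i ≤ N) :
    hElt F N i • v = hval F lam i • v := by
  have hK : Kσ F N i • v = vv F ^ pairσ lam i • v := by
    rw [Kσ, sq_smul_of_smul_zpow (kσ_smul hv hi)]
  have hKinv : KσInv F N i • v = vv F ^ (-pairσ lam i) • v := by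
    rw [KσInv, sq_smul_of_smul_zpow (kσinv_smul hv hi)]
  have hdiff : (vv F ^ (i : ℤ) • Kσ F N i - vv F ^ (-(i : ℤ)) • KσInv F N i) • v =
      (vv F ^ (i + pairσ lam i) - vv F ^ (-i - pairσ lam i)) • v := by
    rw [sub_smul, smul_assoc, smul_assoc, hK, hKinv, smul_smul, smul_smul, ← sub_smul,
      ← zpow_add₀ (vv_ne_zero F), ← zpow_add₀ (vv_ne_zero F), sub_eq_add_neg (-(i : ℤ))]
  rw [hElt, smul_assoc, mul_smul (KσInv F N i), hdiff, smul_comm (KσInv F N i), hKinv, smul_smul,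
    smul_smul, hval, qint]
  congr 1
  rw [show -(pairσ lam i + (i : ℤ) - 1) = (1 - i) + -pairσ lam i by ring,
    show -(pairσ lam i + (i : ℤ)) = -i - pairσ lam i by ring, add_comm (pairσ lam i) (i : ℤ),
    zpow_add₀ (vv_ne_zero F) (1 - (i : ℤ))]
  ring

theorem HI_smul (hv : IsHighestWeightVector F N lam v) (I : Finset ℕ) :
    HI F N I • v = HIval F N lam I • v := by
  have hmap : ∀ i ∈ (rSet N I).sort (· ≤ ·), hElt F N i • v = hval F lam i • v := by
    intro i hi
    obtain ⟨s, hs, rfl⟩ := Finset.mem_image.1 (Finset.mem_sort _ |>.1 hi)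
    have hsN := (Finset.mem_Icc.1 (Finset.mem_sdiff.1 hs).1).2
    exact hElt_smul hv (by lia)
  rw [HI, list_map_prod_smul hmap, ← List.prod_toFinset _ (Finset.sort_nodup _ _),
    Finset.sort_toFinset, HIval]

theorem HIval_eq_prod (lam : ℕ → ℤ) (I : Finset ℕ) :
    HIval F N lam I = ∏ s ∈ Finset.Icc 1 (N + 1) \ I, hval F lam (s - 1) := by
  rw [HIval, rSet, Finset.prod_image]
  intro s hs t ht hst
  simp only [Finset.coe_sdiff, Finset.coe_Icc, Set.mem_sdiff, Set.mem_Icc] at hs ht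
  lia

theorem Theta_smul (hv : IsHighestWeightVector F N lam v) :
    Theta F N • v = chainTheta F N (fun s => hval F lam (s - 1)) 1 • v := by
  rw [Theta, chainTheta, Finset.sum_smul, Finset.sum_smul]
  refine Finset.sum_congr rfl fun I _ => ?_
  rw [mul_smul, HI_smul hv, HIval_eq_prod, smul_comm (fSet F N I), smul_assoc]

theorem egen_smul_Theta_smul_eq_zero {i : ℕ} {k : ℤ} (hv : IsHighestWeightVector F N lam v)
    (hi : i ∈ Finset.Icc 1 N)
    (hsucc : chainTheta F N (fun s => hval F lam (s - 1)) (i + 1) • v ∈ singularSpace F N M i k)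
    (hself : egen F N i • chainTheta F N (fun s => hval F lam (s - 1)) i • v =
      ((qq F)⁻¹ * vv F ^ (-k) * hval F lam (i - 1)) •
        chainTheta F N (fun s => hval F lam (s - 1)) (i + 1) • v) :
    egen F N i • Theta F N • v = 0 := by
  obtain ⟨h1, hN⟩ := Finset.mem_Icc.1 hi
  rw [Theta_smul hv]
  rcases h1.eq_or_lt with rfl | h1
  · rw [hself, hval_zero, mul_zero, zero_smul]
  · exact egen_smul_chainTheta_smul_eq_zero h1 hN (hv i hi) hsucc hself

theorem egen_smul_Theta_smul_of_lt (hv : IsHighestWeightVector F N lam v) {i : ℕ} (h1 : 1 ≤ i)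
    (hN : i < N) : egen F N i • Theta F N • v = 0 := by
  have hvi := hv i (Finset.mem_Icc.2 ⟨h1, hN.le⟩)
  obtain ⟨j, rfl⟩ := Nat.exists_eq_add_of_le' h1
  refine egen_smul_Theta_smul_eq_zero hv (Finset.mem_Icc.2 ⟨h1, hN.le⟩)
    (chainTheta_add_one_smul_mem _ hN hvi) ?_
  rw [egen_smul_chainTheta_smul_self _ hN hvi]
  simp only [Nat.add_sub_cancel, qint_add_hval_succ]

theorem egen_smul_Theta_smul_top (hv : IsHighestWeightVector F N lam v) (hN : 1 ≤ N)
    (hlam : pairσ lam N = 1 - (N : ℤ)) : egen F N N • Theta F N • v = 0 := by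
  have hvN := hv N (Finset.mem_Icc.2 ⟨hN, le_rfl⟩)
  obtain ⟨j, rfl⟩ := Nat.exists_eq_add_of_le' hN
  refine egen_smul_Theta_smul_eq_zero hv (Finset.mem_Icc.2 ⟨hN, le_rfl⟩) (k := lam (j + 1)) ?_ ?_
  · rwa [chainTheta_top, one_smul]
  · rw [egen_smul_chainTheta_smul_top _ hvN, chainTheta_top, one_smul, Nat.add_sub_cancel,
      qint_eq_hval_of_pairσ_eq lam j hlam]

theorem stmt5_general (hv : IsHighestWeightVector F N lam v) :
    (∀ k, 1 ≤ k → k ≤ N - 1 → egen F N k • (Theta F N • v) = 0) ∧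
    (pairσ lam N = 1 - (N : ℤ) →
      ∀ k, 1 ≤ k → k ≤ N → egen F N k • (Theta F N • v) = 0) := by
  refine ⟨fun k h1 hk => egen_smul_Theta_smul_of_lt hv h1 (by lia), fun hlam k h1 hk => ?_⟩
  rcases hk.lt_or_eq with hlt | rfl
  · exact egen_smul_Theta_smul_of_lt hv h1 hlt
  · exact egen_smul_Theta_smul_top hv h1 hlam

end HighestWeight

/-- with `Θ_η = Σ_{I ∈ 𝕀} f_I H_I`:
(a) for every weight `λ` and `1 ≤ k ≤ N-1`, `e_k Θ_η v_λ = 0` in `M(λ)`;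
(b) if moreover `(λ,η) = 1-N`, then `e_k Θ_η v_λ = 0` for all `1 ≤ k ≤ N`,
so `Θ_η v_λ` is annihilated by `e_1, …, e_N` and `Θ_η` is a Shapovalov element
for the pair `(η,1)`. -/
theorem stmt5 (F : Type) [Field F] (N : ℕ) (hN : 1 ≤ N) (lam : ℕ → ℤ) :
    (∀ k, 1 ≤ k → k ≤ N - 1 →
        egen F N k • (Theta F N • hw F N lam) = 0) ∧
    (pairσ lam N = 1 - (N : ℤ) →
      ∀ k, 1 ≤ k → k ≤ N →
        egen F N k • (Theta F N • hw F N lam) = 0) := by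
  exact stmt5_general (isHighestWeightVector_hw lam)
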